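/- ∑_{k=1}^∞ (−27/16)^k / (k² · C(3k,k)) = 6·arctan²((4√3 − √15)/11) − 2·(log 2)². -/

import Mathlib

open Real

/-!
Let `G z = ∑ z ^ k / (k ^ 2 * C(3k, k))`. The coefficients of `G'` are beta integrals, so
`G' z = ∫₀¹ (1 - t) ^ 2 / (1 - z t (1 - t) ^ 2) dt`. With the Koebe function
`K v = v / (1 - v) ^ 2` and `z = -27 K (u ^ 3)`, the denominator factors over the cube roots of
unity as `∏ ζ, (1 + 3 t K (ζ u))`. The logarithmic derivative of this product in `u` is the partial
fraction decomposition of the integrand, and integrating it in `t` shows that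
`G z = -1/3 * ∑ ζ, log (1 + 3 K (ζ u)) ^ 2`, because the three logarithms sum to zero.

For real `u` the logarithm at `ζ = 1` is real and the other two are conjugate with imaginary parts
`±3 arctan (√3 u / (2 + u))`. The point `z = -27 / 16` is `u = (3 - √5) / 2`.
-/

lemma one_sub_ne_zero_of_norm_lt_one {v : ℂ} (hv : ‖v‖ < 1) : 1 - v ≠ 0 :=
  (isUnit_one_sub_of_norm_lt_one hv).ne_zero

lemma norm_cube_lt_one {v : ℂ} (hv : ‖v‖ < 1) : ‖v ^ 3‖ < 1 := by
  rw [norm_pow]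
  exact pow_lt_one₀ (norm_nonneg v) hv three_ne_zero

lemma norm_mul_eq_of_cube_eq_one {ζ : ℂ} (hζ : ζ ^ 3 = 1) (u : ℂ) : ‖ζ * u‖ = ‖u‖ := by
  rw [norm_mul, Complex.norm_eq_one_of_pow_eq_one hζ three_ne_zero, one_mul]

lemma sq_mem_slitPlane_of_re_pos {z : ℂ} (hz : 0 < z.re) : z ^ 2 ∈ Complex.slitPlane := by
  rw [Complex.mem_slitPlane_iff, sq, Complex.mul_re, Complex.mul_im]
  by_cases him : z.im = 0
  · left
    rw [him]
    nlinarith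
  · right
    rw [mul_comm z.im, ← two_mul]
    exact mul_ne_zero two_ne_zero (mul_ne_zero hz.ne' him)

lemma re_one_add_div_one_sub_pos {v : ℂ} (hv : ‖v‖ < 1) : 0 < ((1 + v) / (1 - v)).re := by
  have hden := Complex.normSq_pos.mpr (one_sub_ne_zero_of_norm_lt_one hv)
  have hnum : (1 + v).re * (1 - v).re + (1 + v).im * (1 - v).im = 1 - ‖v‖ ^ 2 := by
    simp only [Complex.sq_norm, Complex.normSq_apply, Complex.add_re, Complex.add_im,
      Complex.sub_re, Complex.sub_im, Complex.one_re, Complex.one_im]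
    ring
  rw [Complex.div_re, ← add_div, hnum]
  exact div_pos (by nlinarith [norm_nonneg v]) hden

lemma arg_eq_arctan_of_re_pos {z : ℂ} (hz : 0 < z.re) : z.arg = arctan (z.im / z.re) := by
  obtain ⟨hlo, hhi⟩ := abs_lt.mp (Complex.abs_arg_lt_pi_div_two_iff.mpr (.inl hz))
  rw [← Complex.tan_arg, arctan_tan hlo hhi]

/-! ### The series as a primitive of a beta-type integral -/

lemma integral_pow_mul_one_sub_pow (k n : ℕ) :
    ∫ t in (0 : ℝ)..1, (t : ℂ) ^ k * (1 - t) ^ n =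
      (((k : ℂ) + 1) * ((n + k + 1).choose (k + 1) : ℂ))⁻¹ := by
  have hre (m : ℕ) : 0 < (m + 1 : ℂ).re := by
    rw [Complex.add_re, Complex.natCast_re, Complex.one_re]
    positivity
  have hbeta := Complex.betaIntegral_eq_Gamma_mul_div (k + 1) (n + 1) (hre k) (hre n)
  have hsum : (k + 1 + (n + 1) : ℂ) = ((n + k + 1 : ℕ) : ℂ) + 1 := by push_cast; ring
  simp only [hsum, Complex.Gamma_nat_eq_factorial, Complex.betaIntegral, add_sub_cancel_right,
    Complex.cpow_natCast] at hbeta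
  rw [hbeta, Nat.cast_choose ℂ (by omega), Nat.factorial_succ k,
    show n + k + 1 - (k + 1) = n by omega]
  push_cast
  field_simp

/-- The series `∑_{k ≥ 1} z ^ k / (k ^ 2 * C(3k, k))` of the theorem as a function of `z`, with the
index shifted to start at `0`. -/
noncomputable def invChooseSeries (z : ℂ) : ℂ :=
  ∑' k : ℕ, z ^ (k + 1) / (((k : ℂ) + 1) ^ 2 * ((3 * (k + 1)).choose (k + 1) : ℂ))

lemma mul_one_sub_sq_le {t : ℝ} (ht : t ≤ 4 / 3) : t * (1 - t) ^ 2 ≤ 4 / 27 := by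
  nlinarith [mul_nonneg (sq_nonneg (3 * t - 1)) (by linarith : 0 ≤ 4 - 3 * t)]

lemma norm_mul_one_sub_sq_le {z : ℂ} {r t : ℝ} (hz : ‖z‖ ≤ r) (ht0 : 0 ≤ t) (ht1 : t ≤ 1) :
    ‖z * (t * (1 - t) ^ 2)‖ ≤ 4 / 27 * r := by
  have hnorm : ‖(t * (1 - t) ^ 2 : ℂ)‖ = t * (1 - t) ^ 2 := by
    norm_cast
    exact abs_of_nonneg (by positivity)
  rw [norm_mul, hnorm]
  nlinarith [mul_one_sub_sq_le (ht1.trans (by norm_num)), norm_nonneg z]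

lemma norm_pow_mul_one_sub_sq_le {z : ℂ} {r t : ℝ} (hz : ‖z‖ ≤ r) (ht0 : 0 ≤ t) (ht1 : t ≤ 1)
    (k : ℕ) : ‖(z * (t * (1 - t) ^ 2)) ^ k * (1 - t) ^ 2‖ ≤ (4 / 27 * r) ^ k := by
  have hnorm : ‖((1 - t) ^ 2 : ℂ)‖ ≤ 1 := by
    norm_cast
    exact (abs_of_nonneg (sq_nonneg _)).trans_le (pow_le_one₀ (by linarith) (by linarith))
  rw [norm_mul, norm_pow]
  exact (mul_le_of_le_one_right (by positivity) hnorm).trans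
    (pow_le_pow_left₀ (norm_nonneg _) (norm_mul_one_sub_sq_le hz ht0 ht1) k)

lemma integral_pow_mul_one_sub_sq (z : ℂ) (k : ℕ) :
    ∫ t in (0 : ℝ)..1, (z * (t * (1 - t) ^ 2)) ^ k * (1 - t) ^ 2 =
      z ^ k / ((k + 1) * ((3 * (k + 1)).choose (k + 1) : ℂ)) := by
  have hsplit (t : ℝ) : (z * (t * (1 - t) ^ 2)) ^ k * (1 - t) ^ 2 =
      z ^ k * ((t : ℂ) ^ k * (1 - t) ^ (2 * k + 2)) := by
    rw [mul_pow, mul_pow, pow_add, pow_mul]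
    ring
  simp only [hsplit]
  rw [intervalIntegral.integral_const_mul, integral_pow_mul_one_sub_pow,
    show 2 * k + 2 + k + 1 = 3 * (k + 1) by ring, div_eq_mul_inv]

lemma hasSum_pow_div_mul_choose {z : ℂ} (hz : ‖z‖ < 27 / 4) :
    HasSum (fun k : ℕ => z ^ k / ((k + 1) * ((3 * (k + 1)).choose (k + 1) : ℂ)))
      (∫ t in (0 : ℝ)..1, (1 - t : ℂ) ^ 2 / (1 - z * (t * (1 - t) ^ 2))) := by
  simp only [← integral_pow_mul_one_sub_sq]
  have hratio : 4 / 27 * ‖z‖ < 1 := by linarith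
  refine intervalIntegral.hasSum_integral_of_dominated_convergence
    (fun k _ => (4 / 27 * ‖z‖) ^ k) (fun k => Continuous.aestronglyMeasurable (by fun_prop))
    (fun k => .of_forall fun t ht => ?_)
    (.of_forall fun _ _ => summable_geometric_of_lt_one (by positivity) hratio)
    intervalIntegrable_const (.of_forall fun t ht => ?_) <;>
  rw [Set.uIoc_of_le zero_le_one] at ht
  · exact norm_pow_mul_one_sub_sq_le le_rfl ht.1.le ht.2 k
  · rw [div_eq_inv_mul]
    exact (hasSum_geometric_of_norm_lt_one
      ((norm_mul_one_sub_sq_le le_rfl ht.1.le ht.2).trans_lt hratio)).mul_right _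

lemma norm_pow_div_mul_choose_le {z : ℂ} {r : ℝ} (hz : ‖z‖ ≤ r) (k : ℕ) :
    ‖z ^ k / ((k + 1) * ((3 * (k + 1)).choose (k + 1) : ℂ))‖ ≤ (4 / 27 * r) ^ k := by
  rw [← integral_pow_mul_one_sub_sq]
  simpa using intervalIntegral.norm_integral_le_of_norm_le_const (a := 0) (b := 1) fun t ht => by
    rw [Set.uIoc_of_le zero_le_one] at ht
    exact norm_pow_mul_one_sub_sq_le hz ht.1.le ht.2 k

lemma hasDerivAt_invChooseSeries {z : ℂ} (hz : ‖z‖ < 27 / 4) :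
    HasDerivAt invChooseSeries
      (∫ t in (0 : ℝ)..1, (1 - t : ℂ) ^ 2 / (1 - z * (t * (1 - t) ^ 2))) z := by
  obtain ⟨r, hzr, hr⟩ := exists_between hz
  have hr0 : 0 < r := (norm_nonneg z).trans_lt hzr
  rw [← (hasSum_pow_div_mul_choose hz).tsum_eq]
  refine hasDerivAt_tsum_of_isPreconnected (t := Metric.ball 0 r) (y₀ := 0)
    (u := fun k => (4 / 27 * r) ^ k)
    (summable_geometric_of_lt_one (by positivity) (by linarith)) Metric.isOpen_ball
    (convex_ball _ _).isPreconnected (fun k y _ => ?_)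
    (fun k y hy => norm_pow_div_mul_choose_le (z := y) (mem_ball_zero_iff.mp hy).le k)
    (Metric.mem_ball_self hr0) (by simp [summable_zero]) (mem_ball_zero_iff.mpr hzr)
  refine ((hasDerivAt_pow (k + 1) y).div_const _).congr_deriv ?_
  have hk : (k + 1 : ℂ) ≠ 0 := k.cast_add_one_ne_zero
  rw [add_tsub_cancel_right, sq, mul_assoc, Nat.cast_add_one, mul_div_mul_left _ _ hk]

/-! ### The Koebe function -/

/-- The Koebe function `v / (1 - v) ^ 2`, used to uniformize the integrand of
`hasDerivAt_invChooseSeries` on the unit disc. Its value at the pole `v = 1` is `0`. -/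
noncomputable def koebe (v : ℂ) : ℂ := v / (1 - v) ^ 2

lemma koebe_ofReal (u : ℝ) : koebe u = (u / (1 - u) ^ 2 : ℝ) := by
  rw [koebe]
  push_cast
  rfl

lemma hasDerivAt_koebe {v : ℂ} (hv : 1 - v ≠ 0) :
    HasDerivAt koebe ((1 + v) / (1 - v) ^ 3) v := by
  refine ((hasDerivAt_id v).div (((hasDerivAt_id v).const_sub 1).pow 2)
    (pow_ne_zero 2 hv)).congr_deriv ?_
  simp only [id_eq, Pi.pow_apply]
  field_simp
  push_cast
  ring

lemma norm_koebe_mul_le {v : ℂ} (hv : ‖v‖ < 1) {r : ℝ} (h0 : 0 ≤ r) (h1 : r ≤ 1) :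
    ‖koebe (r * v)‖ ≤ ‖koebe v‖ := by
  have hv1 := norm_pos_iff.mpr (one_sub_ne_zero_of_norm_lt_one hv)
  have hrv1 : 0 < ‖1 - r * v‖ := by
    refine norm_pos_iff.mpr (one_sub_ne_zero_of_norm_lt_one ?_)
    rw [norm_mul, Complex.norm_of_nonneg h0]
    nlinarith [norm_nonneg v]
  have hdiff : ‖1 - r * v‖ ^ 2 - r * ‖1 - v‖ ^ 2 = (1 - r) * (1 - r * ‖v‖ ^ 2) := by
    simp only [Complex.sq_norm, Complex.normSq_apply, Complex.sub_re, Complex.sub_im,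
      Complex.one_re, Complex.one_im, Complex.re_ofReal_mul, Complex.im_ofReal_mul]
    ring
  have hle : r * ‖1 - v‖ ^ 2 ≤ ‖1 - r * v‖ ^ 2 := by
    have hrv : r * ‖v‖ ^ 2 ≤ 1 :=
      mul_le_one₀ h1 (by positivity) (pow_le_one₀ (norm_nonneg v) hv.le)
    nlinarith
  simp only [koebe, norm_div, norm_pow, norm_mul, Complex.norm_of_nonneg h0]
  rw [div_le_div_iff₀ (by positivity) (by positivity)]
  nlinarith [norm_nonneg v]

lemma one_add_four_mul_koebe {v : ℂ} (hv : 1 - v ≠ 0) :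
    1 + 4 * koebe v = ((1 + v) / (1 - v)) ^ 2 := by
  rw [koebe]
  field_simp
  ring

lemma one_add_three_mul_koebe {v : ℂ} (hv : 1 - v ≠ 0) :
    1 + 3 * koebe v = (1 - v ^ 3) / (1 - v) ^ 3 := by
  rw [koebe]
  field_simp
  ring

lemma one_add_mul_koebe_mem_slitPlane {v : ℂ} (hv : ‖v‖ < 1) {s : ℝ} (hs0 : 0 ≤ s)
    (hs4 : s ≤ 4) : 1 + s * koebe v ∈ Complex.slitPlane := by
  have hmem : 1 + 4 * koebe v ∈ Complex.slitPlane := by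
    rw [one_add_four_mul_koebe (one_sub_ne_zero_of_norm_lt_one hv)]
    exact sq_mem_slitPlane_of_re_pos (re_one_add_div_one_sub_pos hv)
  convert Complex.starConvex_one_slitPlane.add_smul_mem hmem
    (by positivity : 0 ≤ s / 4) (by linarith) using 2
  rw [Complex.real_smul]
  push_cast
  ring

lemma one_add_three_mul_koebe_mem_slitPlane {v : ℂ} (hv : ‖v‖ < 1) :
    1 + 3 * koebe v ∈ Complex.slitPlane := by
  exact_mod_cast one_add_mul_koebe_mem_slitPlane hv (s := 3) (by norm_num) (by norm_num)

lemma one_add_smul_koebe_ne_zero {v : ℂ} (hv : ‖v‖ < 1) {t : ℝ} (ht0 : 0 ≤ t) (ht1 : t ≤ 1) :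
    1 + t • (3 * koebe v) ≠ 0 :=
  Complex.slitPlane_ne_zero <| Complex.starConvex_one_slitPlane.add_smul_mem
    (one_add_three_mul_koebe_mem_slitPlane hv) ht0 ht1

/-- The principal logarithm of `1 + 3 * koebe v`; the argument avoids the branch cut on the unit
disc. -/
noncomputable def logKoebe (v : ℂ) : ℂ := Complex.log (1 + 3 * koebe v)

lemma logKoebe_zero : logKoebe 0 = 0 := by simp [logKoebe, koebe]

lemma hasDerivAt_logKoebe {v : ℂ} (hv : ‖v‖ < 1) :
    HasDerivAt logKoebe (3 * (1 + v) / (1 - v ^ 3)) v := by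
  have hv1 := one_sub_ne_zero_of_norm_lt_one hv
  have hv3 := one_sub_ne_zero_of_norm_lt_one (norm_cube_lt_one hv)
  refine ((((hasDerivAt_koebe hv1).const_mul 3).const_add 1).clog
    (one_add_three_mul_koebe_mem_slitPlane hv)).congr_deriv ?_
  rw [one_add_three_mul_koebe hv1]
  field_simp

lemma mul_deriv_koebe_mul_integral {v : ℂ} (hv : ‖v‖ < 1) :
    v * (3 * ((1 + v) / (1 - v) ^ 3) * ∫ t in (0 : ℝ)..1, (1 + t • (3 * koebe v))⁻¹) =
      (1 + v) / (1 - v) * logKoebe v := by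
  have hv1 := one_sub_ne_zero_of_norm_lt_one hv
  rw [logKoebe, Complex.log_eq_integral (one_add_three_mul_koebe_mem_slitPlane hv), koebe]
  field_simp

lemma hasDerivAt_one_add_smul_koebe_mul {ζ u : ℂ} (hζ : ζ ^ 3 = 1) (hu : ‖u‖ < 1) (t : ℝ) :
    HasDerivAt (fun u => 1 + t • (3 * koebe (ζ * u)))
      (t * (3 * ζ * ((1 + ζ * u) / (1 - ζ * u) ^ 3))) u := by
  have hζu := one_sub_ne_zero_of_norm_lt_one ((norm_mul_eq_of_cube_eq_one hζ u).trans_lt hu)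
  refine (((((hasDerivAt_koebe hζu).comp u ((hasDerivAt_id u).const_mul ζ)).const_mul
    3).const_smul t).const_add 1).congr_deriv ?_
  simp only [Complex.real_smul, mul_one]
  ring

lemma hasDerivAt_logKoebe_mul {ζ u : ℂ} (hζ : ζ ^ 3 = 1) (hu : ‖u‖ < 1) :
    HasDerivAt (fun u => logKoebe (ζ * u)) (3 * ζ * (1 + ζ * u) / (1 - u ^ 3)) u := by
  have hζu : ‖ζ * u‖ < 1 := (norm_mul_eq_of_cube_eq_one hζ u).trans_lt hu
  refine ((hasDerivAt_logKoebe hζu).comp u ((hasDerivAt_id u).const_mul ζ)).congr_deriv ?_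
  rw [mul_pow, hζ]
  ring

/-! ### Factorization over the cube roots of unity -/

/-- The argument `-27 * u ^ 3 / (1 - u ^ 3) ^ 2` of the series, chosen so that
`1 - cubicPoint u * t * (1 - t) ^ 2` splits into the linear factors `1 + 3 * t * koebe (ζ * u)`,
`ζ ^ 3 = 1`. -/
noncomputable def cubicPoint (u : ℂ) : ℂ := -27 * koebe (u ^ 3)

lemma hasDerivAt_cubicPoint {u : ℂ} (hu : ‖u‖ < 1) :
    HasDerivAt cubicPoint (-81 * u ^ 2 * ((1 + u ^ 3) / (1 - u ^ 3) ^ 3)) u := by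
  have hu3 := one_sub_ne_zero_of_norm_lt_one (norm_cube_lt_one hu)
  refine (((hasDerivAt_koebe hu3).comp u (hasDerivAt_pow 3 u)).const_mul (-27)).congr_deriv ?_
  push_cast
  ring

section CubeRoots

variable {ω u : ℂ} (hω : 1 + ω + ω ^ 2 = 0)
include hω

lemma cube_eq_one_of_one_add_add_sq : ω ^ 3 = 1 := by linear_combination (ω - 1) * hω

lemma cube_pow_eq_one_of_one_add_add_sq (j : ℕ) : (ω ^ j) ^ 3 = 1 := by
  rw [pow_right_comm, cube_eq_one_of_one_add_add_sq hω, one_pow]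

lemma norm_pow_mul_eq (u : ℂ) (j : ℕ) : ‖ω ^ j * u‖ = ‖u‖ :=
  norm_mul_eq_of_cube_eq_one (cube_pow_eq_one_of_one_add_add_sq hω j) u

lemma prod_one_sub_pow_mul (u : ℂ) : ∏ j ∈ Finset.range 3, (1 - ω ^ j * u) = 1 - u ^ 3 := by
  simp only [Finset.prod_range_succ, Finset.prod_range_zero]
  grind

lemma prod_sq_sub_mul_add_one (u c : ℂ) :
    ∏ j ∈ Finset.range 3, ((ω ^ j * u) ^ 2 - c * (ω ^ j * u) + 1) =
      (u ^ 3) ^ 2 - (c ^ 3 - 3 * c) * u ^ 3 + 1 := by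
  simp only [Finset.prod_range_succ, Finset.prod_range_zero]
  grind

lemma prod_one_add_smul_koebe (hu : ‖u‖ < 1) (t : ℝ) :
    ∏ j ∈ Finset.range 3, (1 + t • (3 * koebe (ω ^ j * u))) =
      1 - cubicPoint u * (t * (1 - t) ^ 2) := by
  have hu3 := one_sub_ne_zero_of_norm_lt_one (norm_cube_lt_one hu)
  have hterm (j : ℕ) : 1 + t • (3 * koebe (ω ^ j * u)) =
      ((ω ^ j * u) ^ 2 - (2 - 3 * t) * (ω ^ j * u) + 1) / (1 - ω ^ j * u) ^ 2 := by
    have hne := one_sub_ne_zero_of_norm_lt_one ((norm_pow_mul_eq hω u j).trans_lt hu)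
    rw [koebe, Complex.real_smul]
    field_simp
    ring
  simp only [hterm]
  rw [Finset.prod_div_distrib, Finset.prod_pow, prod_one_sub_pow_mul hω,
    prod_sq_sub_mul_add_one hω, cubicPoint, koebe]
  field_simp
  ring

lemma sum_logKoebe_eq_zero (hu : ‖u‖ < 1) :
    ∑ j ∈ Finset.range 3, logKoebe (ω ^ j * u) = 0 := by
  have hderiv (w : ℂ) (hw : w ∈ Metric.ball (0 : ℂ) 1) :
      HasDerivAt (fun w => ∑ j ∈ Finset.range 3, logKoebe (ω ^ j * w)) 0 w := by
    refine (HasDerivAt.fun_sum fun j _ => hasDerivAt_logKoebe_mul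
      (cube_pow_eq_one_of_one_add_add_sq hω j) (mem_ball_zero_iff.mp hw)).congr_deriv ?_
    rw [← Finset.sum_div]
    simp only [Finset.sum_range_succ, Finset.sum_range_zero]
    refine div_eq_zero_iff.mpr (.inl ?_)
    linear_combination (3 + 3 * (1 - ω + ω ^ 2) * w) * hω
  have hconst := Metric.isOpen_ball.is_const_of_deriv_eq_zero
    (convex_ball (0 : ℂ) 1).isPreconnected
    (fun w hw => (hderiv w hw).differentiableAt.differentiableWithinAt)
    (fun w hw => (hderiv w hw).deriv) (mem_ball_zero_iff.mpr hu) (Metric.mem_ball_self one_pos)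
  simpa [logKoebe_zero] using hconst

-- Both sides are `-1 / t` times the logarithmic derivative in `u` of `prod_one_add_smul_koebe`.
lemma deriv_cubicPoint_mul_kernel (hu : ‖u‖ < 1) {t : ℝ} (ht0 : 0 < t) (ht1 : t ≤ 1) :
    -81 * u ^ 2 * ((1 + u ^ 3) / (1 - u ^ 3) ^ 3) *
        ((1 - t : ℂ) ^ 2 / (1 - cubicPoint u * (t * (1 - t) ^ 2))) =
      -∑ j ∈ Finset.range 3, 3 * ω ^ j * ((1 + ω ^ j * u) / (1 - ω ^ j * u) ^ 3) *
        (1 + t • (3 * koebe (ω ^ j * u)))⁻¹ := by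
  have hfactor (j : ℕ) :=
    hasDerivAt_one_add_smul_koebe_mul (cube_pow_eq_one_of_one_add_add_sq hω j) hu t
  have hprod : (fun w => ∏ j ∈ Finset.range 3, (1 + t • (3 * koebe (ω ^ j * w)))) =ᶠ[nhds u]
      fun w => 1 - cubicPoint w * (t * (1 - t) ^ 2) := by
    filter_upwards [Metric.isOpen_ball.mem_nhds (mem_ball_zero_iff.mpr hu)] with w hw
    exact prod_one_add_smul_koebe hω (mem_ball_zero_iff.mp hw) t
  have hlog := (logDeriv_congr_nhds hprod).eq_of_nhds
  rw [logDeriv_prod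
    (fun j _ => one_add_smul_koebe_ne_zero ((norm_pow_mul_eq hω u j).trans_lt hu) ht0.le ht1)
    fun j _ => (hfactor j).differentiableAt] at hlog
  simp only [logDeriv_apply, (hfactor _).deriv] at hlog
  rw [(((hasDerivAt_cubicPoint hu).mul_const _).const_sub 1).deriv] at hlog
  have ht : (t : ℂ) ≠ 0 := by exact_mod_cast ht0.ne'
  refine mul_left_cancel₀ ht ?_
  rw [mul_neg, Finset.mul_sum, eq_neg_iff_add_eq_zero]
  simp only [div_eq_mul_inv, mul_assoc] at hlog ⊢
  rw [hlog]
  ring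

lemma deriv_cubicPoint_mul_integral (hu : ‖u‖ < 1) :
    -81 * u ^ 2 * ((1 + u ^ 3) / (1 - u ^ 3) ^ 3) *
        ∫ t in (0 : ℝ)..1, (1 - t : ℂ) ^ 2 / (1 - cubicPoint u * (t * (1 - t) ^ 2)) =
      -∑ j ∈ Finset.range 3, 3 * ω ^ j * ((1 + ω ^ j * u) / (1 - ω ^ j * u) ^ 3) *
        ∫ t in (0 : ℝ)..1, (1 + t • (3 * koebe (ω ^ j * u)))⁻¹ := by
  have hint (j : ℕ) : IntervalIntegrable (fun t : ℝ => (1 + t • (3 * koebe (ω ^ j * u)))⁻¹)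
      MeasureTheory.volume 0 1 :=
    ContinuousOn.intervalIntegrable_of_Icc zero_le_one <| Complex.continuousOn_one_add_mul_inv <|
      one_add_three_mul_koebe_mem_slitPlane ((norm_pow_mul_eq hω u j).trans_lt hu)
  simp only [← intervalIntegral.integral_const_mul]
  rw [← intervalIntegral.integral_finsetSum fun j _ => (hint j).const_mul _,
    ← intervalIntegral.integral_neg]
  exact intervalIntegral.integral_congr_Ioo_of_le zero_le_one fun t ht =>
    deriv_cubicPoint_mul_kernel hω hu ht.1 ht.2.le

lemma deriv_cubicPoint_mul_integral_eq_sum_logKoebe (hu : ‖u‖ < 1) :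
    -81 * u ^ 2 * ((1 + u ^ 3) / (1 - u ^ 3) ^ 3) *
        ∫ t in (0 : ℝ)..1, (1 - t : ℂ) ^ 2 / (1 - cubicPoint u * (t * (1 - t) ^ 2)) =
      -(2 / 3) * ∑ j ∈ Finset.range 3,
        logKoebe (ω ^ j * u) * (3 * ω ^ j * (1 + ω ^ j * u) / (1 - u ^ 3)) := by
  rcases eq_or_ne u 0 with rfl | hu0
  · simp [logKoebe_zero]
  have hu3 := one_sub_ne_zero_of_norm_lt_one (norm_cube_lt_one hu)
  -- The last summand has a coefficient independent of `j`, so it disappears on summation.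
  have hterm (j : ℕ) : u * (3 * ω ^ j * ((1 + ω ^ j * u) / (1 - ω ^ j * u) ^ 3) *
        ∫ t in (0 : ℝ)..1, (1 + t • (3 * koebe (ω ^ j * u)))⁻¹) =
      2 / 3 * (u * (logKoebe (ω ^ j * u) * (3 * ω ^ j * (1 + ω ^ j * u) / (1 - u ^ 3)))) +
        (1 + u ^ 3) / (1 - u ^ 3) * logKoebe (ω ^ j * u) := by
    have hj : ‖ω ^ j * u‖ < 1 := (norm_pow_mul_eq hω u j).trans_lt hu
    have hcoeff : (1 + ω ^ j * u) / (1 - ω ^ j * u) =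
        2 * (ω ^ j * u * (1 + ω ^ j * u)) / (1 - u ^ 3) + (1 + u ^ 3) / (1 - u ^ 3) := by
      have hcube : u ^ 3 = (ω ^ j * u) ^ 3 := by
        rw [mul_pow, cube_pow_eq_one_of_one_add_add_sq hω, one_mul]
      rw [← add_div, div_eq_div_iff (one_sub_ne_zero_of_norm_lt_one hj) hu3, hcube]
      ring
    linear_combination mul_deriv_koebe_mul_integral hj + logKoebe (ω ^ j * u) * hcoeff
  refine mul_left_cancel₀ hu0 ?_
  rw [deriv_cubicPoint_mul_integral hω hu, mul_neg, Finset.mul_sum]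
  simp only [hterm]
  rw [Finset.sum_add_distrib, ← Finset.mul_sum, ← Finset.mul_sum, ← Finset.mul_sum,
    sum_logKoebe_eq_zero hω hu]
  ring

end CubeRoots

/-- The points `u` of the unit disc at which `cubicPoint u` lies in the open disc of radius
`27 / 4`, where `invChooseSeries` is differentiable. -/
def cubicDomain : Set ℂ := {u | ‖u‖ < 1 ∧ 4 * ‖koebe (u ^ 3)‖ < 1}

lemma zero_mem_cubicDomain : 0 ∈ cubicDomain := by simp [cubicDomain, koebe]

lemma isOpen_cubicDomain : IsOpen cubicDomain := by
  have hcont : ContinuousOn (fun u => 4 * ‖koebe (u ^ 3)‖) (Metric.ball 0 1) := fun u hu =>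
    have hu3 := one_sub_ne_zero_of_norm_lt_one (norm_cube_lt_one (mem_ball_zero_iff.mp hu))
    (((hasDerivAt_koebe hu3).continuousAt.comp (f := (· ^ 3))
      (continuousAt_id.pow 3)).norm.const_mul 4).continuousWithinAt
  convert hcont.isOpen_inter_preimage Metric.isOpen_ball (isOpen_Iio (a := 1)) using 1
  ext u
  simp [cubicDomain]

lemma starConvex_cubicDomain : StarConvex ℝ 0 cubicDomain := by
  refine starConvex_zero_iff.mpr fun u hu r hr0 hr1 => ⟨?_, ?_⟩
  · rw [norm_smul, Real.norm_of_nonneg hr0]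
    exact (mul_le_of_le_one_left (norm_nonneg u) hr1).trans_lt hu.1
  · have hle := norm_koebe_mul_le (norm_cube_lt_one hu.1) (pow_nonneg hr0 3) (pow_le_one₀ hr0 hr1)
    rw [Complex.real_smul, mul_pow, ← Complex.ofReal_pow]
    linarith [hu.2]

lemma norm_cubicPoint_lt {u : ℂ} (hu : u ∈ cubicDomain) : ‖cubicPoint u‖ < 27 / 4 := by
  rw [cubicPoint, norm_mul, norm_neg, Complex.norm_ofNat]
  linarith [hu.2]

theorem invChooseSeries_cubicPoint {ω : ℂ} (hω : 1 + ω + ω ^ 2 = 0) {u : ℂ}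
    (hu : u ∈ cubicDomain) :
    invChooseSeries (cubicPoint u) =
      -(1 / 3) * ∑ j ∈ Finset.range 3, logKoebe (ω ^ j * u) ^ 2 := by
  have hlhs (w : ℂ) (hw : w ∈ cubicDomain) :=
    (hasDerivAt_invChooseSeries (norm_cubicPoint_lt hw)).comp w (hasDerivAt_cubicPoint hw.1)
  have hrhs (w : ℂ) (hw : w ∈ cubicDomain) :=
    (HasDerivAt.fun_sum (u := Finset.range 3) fun j _ => (hasDerivAt_logKoebe_mul
      (cube_pow_eq_one_of_one_add_add_sq hω j) hw.1).pow 2).const_mul (-(1 / 3 : ℂ))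
  refine isOpen_cubicDomain.eqOn_of_deriv_eq
    (starConvex_cubicDomain.isPathConnected zero_mem_cubicDomain).isConnected.isPreconnected
    (fun w hw => (hlhs w hw).differentiableAt.differentiableWithinAt)
    (fun w hw => (hrhs w hw).differentiableAt.differentiableWithinAt)
    (fun w hw => ?_) zero_mem_cubicDomain ?_ hu
  · rw [(hlhs w hw).deriv, (hrhs w hw).deriv, mul_comm,
      deriv_cubicPoint_mul_integral_eq_sum_logKoebe hω hw.1, Finset.mul_sum, Finset.mul_sum]
    refine Finset.sum_congr rfl fun j _ => ?_
    rw [Nat.cast_ofNat, show 2 - 1 = 1 from rfl, pow_one]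
    ring
  · simp [invChooseSeries, cubicPoint, koebe, logKoebe_zero]

/-! ### Real points -/

open ComplexConjugate

lemma logKoebe_conj {v : ℂ} (hv : ‖v‖ < 1) : logKoebe (conj v) = conj (logKoebe v) := by
  rw [logKoebe, logKoebe, ← Complex.log_conj _
    (Complex.slitPlane_arg_ne_pi (one_add_three_mul_koebe_mem_slitPlane hv))]
  simp [koebe, map_ofNat]

lemma logKoebe_ofReal {u : ℝ} (hu : u ≠ 1) :
    logKoebe u = (log ((1 + u + u ^ 2) / (1 - u) ^ 2) : ℝ) := by
  have hu1 : 1 - u ≠ 0 := sub_ne_zero.mpr hu.symm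
  have hreal : 1 + 3 * (u / (1 - u) ^ 2) = (1 + u + u ^ 2) / (1 - u) ^ 2 := by
    field_simp
    ring
  have hnonneg : 0 ≤ 1 + u + u ^ 2 := by nlinarith
  rw [logKoebe, koebe_ofReal, ← Complex.ofReal_ofNat, ← Complex.ofReal_mul, ← Complex.ofReal_one,
    ← Complex.ofReal_add, hreal, Complex.ofReal_log (by positivity)]

lemma logKoebe_eq_log_sub {v : ℂ} (hv : 1 - v ≠ 0) (harg : |(1 - v).arg| < π / 3)
    {r : ℝ} (hr : 0 < r) (hvr : 1 - v ^ 3 = r) :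
    logKoebe v = log r - 3 * Complex.log (1 - v) := by
  obtain ⟨hlo, hhi⟩ := abs_lt.mp harg
  have hexp : ((1 - v) ^ 3)⁻¹ = Complex.exp (-(3 * Complex.log (1 - v))) := by
    rw [Complex.exp_neg, show (3 : ℂ) = (3 : ℕ) from rfl, Complex.exp_nat_mul,
      Complex.exp_log hv]
  have him : (-(3 * Complex.log (1 - v))).im = -(3 * (1 - v).arg) := by
    simp [Complex.log_im]
  rw [logKoebe, one_add_three_mul_koebe hv, hvr, div_eq_mul_inv, hexp,
    Complex.log_ofReal_mul hr (Complex.exp_ne_zero _),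
    Complex.log_exp (by linarith) (by linarith), ← sub_eq_add_neg]

/-- The primitive cube root of unity `exp (2πi / 3)`, in Cartesian form. -/
noncomputable def cubeRootOne : ℂ := ⟨-1 / 2, √3 / 2⟩

lemma conj_cubeRootOne : conj cubeRootOne = cubeRootOne ^ 2 := by
  have h3 : √3 ^ 2 = 3 := sq_sqrt zero_le_three
  apply Complex.ext <;>
    simp only [cubeRootOne, sq, Complex.conj_re, Complex.conj_im, Complex.mul_re, Complex.mul_im]
  · linear_combination h3 / 4
  · ring

lemma one_add_cubeRootOne_add_sq : 1 + cubeRootOne + cubeRootOne ^ 2 = 0 := by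
  rw [← conj_cubeRootOne, add_assoc, Complex.add_conj, cubeRootOne]
  norm_num

lemma arg_one_sub_cubeRootOne_mul {u : ℝ} (hu : -2 < u) :
    (1 - cubeRootOne * u).arg = -arctan (√3 * u / (2 + u)) := by
  have hre : (1 - cubeRootOne * u).re = (2 + u) / 2 := by
    rw [Complex.sub_re, Complex.one_re, Complex.re_mul_ofReal, cubeRootOne]
    ring
  have him : (1 - cubeRootOne * u).im = -(√3 * u / 2) := by
    rw [Complex.sub_im, Complex.one_im, Complex.im_mul_ofReal, cubeRootOne]
    ring
  rw [arg_eq_arctan_of_re_pos (by rw [hre]; linarith), hre, him, ← arctan_neg, neg_div,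
    div_div_div_cancel_right₀ two_ne_zero]

lemma abs_arctan_lt_pi_div_three {u : ℝ} (hu : -1 < u) :
    |arctan (√3 * u / (2 + u))| < π / 3 := by
  have h3 : 0 < √3 := by positivity
  have h2 : 0 < 2 + u := by linarith
  rw [← arctan_sqrt_three, abs_lt, ← arctan_neg, arctan_lt_arctan_iff, arctan_lt_arctan_iff,
    lt_div_iff₀ h2, div_lt_iff₀ h2]
  constructor <;> nlinarith

lemma im_logKoebe_cubeRootOne_mul {u : ℝ} (hu : |u| < 1) :
    (logKoebe (cubeRootOne * u)).im = 3 * arctan (√3 * u / (2 + u)) := by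
  obtain ⟨hlo, hhi⟩ := abs_lt.mp hu
  have hω3 := cube_eq_one_of_one_add_add_sq one_add_cubeRootOne_add_sq
  have harg := arg_one_sub_cubeRootOne_mul (by linarith : -2 < u)
  have hu3 : 0 < 1 - u ^ 3 := by nlinarith [sq_nonneg (u + 1), sq_nonneg u]
  rw [logKoebe_eq_log_sub (r := 1 - u ^ 3) _ _ hu3]
  · simp [harg, Complex.log_im]
  · push_cast
    rw [mul_pow, hω3, one_mul]
  · refine one_sub_ne_zero_of_norm_lt_one ?_
    rwa [norm_mul_eq_of_cube_eq_one hω3, Complex.norm_real]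
  · rw [harg, abs_neg]
    exact abs_arctan_lt_pi_div_three hlo

lemma ofReal_sq_add_sq_add_conj_sq {a : ℝ} {z : ℂ} (h : a + z + conj z = 0) :
    (a : ℂ) ^ 2 + z ^ 2 + conj z ^ 2 = (3 / 2 * a ^ 2 - 2 * z.im ^ 2 : ℝ) := by
  have hdiff := Complex.sub_conj z
  push_cast at hdiff ⊢
  linear_combination (z + conj z - a) / 2 * h + (z - conj z + 2 * z.im * Complex.I) / 2 * hdiff +
    2 * z.im ^ 2 * Complex.I_sq

lemma sum_logKoebe_sq {u : ℝ} (hu : |u| < 1) :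
    ∑ j ∈ Finset.range 3, logKoebe (cubeRootOne ^ j * u) ^ 2 =
      (3 / 2 * log ((1 + u + u ^ 2) / (1 - u) ^ 2) ^ 2 -
        18 * arctan (√3 * u / (2 + u)) ^ 2 : ℝ) := by
  have hω3 := cube_eq_one_of_one_add_add_sq one_add_cubeRootOne_add_sq
  have hnorm : ‖(u : ℂ)‖ < 1 := by rwa [Complex.norm_real]
  have hconj : logKoebe (cubeRootOne ^ 2 * u) = conj (logKoebe (cubeRootOne * u)) := by
    rw [← logKoebe_conj ((norm_mul_eq_of_cube_eq_one hω3 u).trans_lt hnorm), map_mul,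
      conj_cubeRootOne, Complex.conj_ofReal]
  have hsum := sum_logKoebe_eq_zero one_add_cubeRootOne_add_sq hnorm
  simp only [Finset.sum_range_succ, Finset.sum_range_zero, pow_zero, pow_one, one_mul, zero_add,
    hconj, logKoebe_ofReal (abs_lt.mp hu).2.ne] at hsum ⊢
  rw [ofReal_sq_add_sq_add_conj_sq hsum, im_logKoebe_cubeRootOne_mul hu]
  congr 1
  ring

lemma ofReal_mem_cubicDomain {u : ℝ} (hu : |u| < 1) (hu3 : 4 * |u| ^ 3 < (1 - u ^ 3) ^ 2) :
    (u : ℂ) ∈ cubicDomain := by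
  refine ⟨by rwa [Complex.norm_real], ?_⟩
  have hpos : 0 < (1 - u ^ 3) ^ 2 := lt_of_le_of_lt (by positivity) hu3
  rwa [← Complex.ofReal_pow, koebe_ofReal, Complex.norm_real, norm_div, norm_pow,
    Real.norm_of_nonneg hpos.le, Real.norm_eq_abs, ← mul_div_assoc, div_lt_one hpos]

theorem tsum_pow_div_sq_mul_choose {u : ℝ} (hu : |u| < 1) (hu3 : 4 * |u| ^ 3 < (1 - u ^ 3) ^ 2) :
    ∑' k : ℕ, (-27 * (u ^ 3 / (1 - u ^ 3) ^ 2)) ^ (k + 1) /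
        (((k : ℝ) + 1) ^ 2 * (((3 * (k + 1)).choose (k + 1) : ℕ) : ℝ)) =
      6 * arctan (√3 * u / (2 + u)) ^ 2 - log ((1 + u + u ^ 2) / (1 - u) ^ 2) ^ 2 / 2 := by
  have hseries := invChooseSeries_cubicPoint one_add_cubeRootOne_add_sq
    (ofReal_mem_cubicDomain hu hu3)
  rw [sum_logKoebe_sq hu, invChooseSeries, cubicPoint, koebe] at hseries
  apply Complex.ofReal_injective
  push_cast at hseries ⊢
  rw [hseries]
  ring

theorem stmt_14 :
    ∑' k : ℕ, (-(27/16) : ℝ)^(k+1) / (((k:ℝ)+1)^2 * (((3*(k+1)).choose (k+1) : ℕ) : ℝ)) =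
    6*(Real.arctan ((4*Real.sqrt 3 - Real.sqrt 15)/11))^2 - 2*(Real.log 2)^2 := by
  have h5 : √5 ^ 2 = 5 := sq_sqrt (by norm_num)
  obtain ⟨u, hu, hu0, hu1⟩ : ∃ u : ℝ, u = (3 - √5) / 2 ∧ 0 < u ∧ u < 1 :=
    ⟨_, rfl, by nlinarith, by nlinarith [sqrt_nonneg 5]⟩
  have hquad : u ^ 2 = 3 * u - 1 := by rw [hu]; linear_combination h5 / 4
  have hcube : (1 - u ^ 3) ^ 2 = 16 * u ^ 3 := by
    linear_combination (u ^ 4 + 3 * u ^ 3 + 8 * u ^ 2 + 3 * u + 1) * hquad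
  have hpoint : -(27 / 16) = -27 * (u ^ 3 / (1 - u ^ 3) ^ 2) := by
    rw [hcube]
    field_simp
  have hlog : (1 + u + u ^ 2) / (1 - u) ^ 2 = 2 ^ 2 := by
    rw [div_eq_iff (by nlinarith)]
    linear_combination -3 * hquad
  have harctan : (4 * √3 - √15) / 11 = √3 * u / (2 + u) := by
    have h15 : √15 = √3 * √5 := by rw [← sqrt_mul zero_le_three]; norm_num
    rw [h15, hu, div_eq_div_iff (by norm_num) (by linarith)]
    linear_combination √3 / 2 * h5
  have habs : |u| = u := abs_of_pos hu0
  rw [hpoint, tsum_pow_div_sq_mul_choose (habs.trans_lt hu1)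
    (by rw [habs, hcube]; linarith [pow_pos hu0 3]), hlog, harctan, log_pow]
  push_cast
  ring
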